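/- Let K be a local field with residue field 𝔽_q, B an n²-central division K-algebra, L ⊆ B a division subalgebra with e' = e(B/L) and f = f(L/K), and C the centralizer of L. In the full rose FR(L) (the portion of the branch S(O_L) above a node of the subtree associated to C, consisting of vertices of levels 0 through e'), every vertex whose level is a positive multiple of f is a node, and no vertex whose level is not a multiple of f is a node; moreover each element of the residue field 𝔹 of B lifts to an element of the centralizer ℂ_{e'} of the image of O_L in O_B/m_B^{e'}. Hence FR(L) is the largest possible (q^n − q^{e'}, e')-rose having nodes only at vertices whose distance to the center is divisible by f. -/

import Mathlib

noncomputable section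

variable {B : Type*} [DivisionRing B]

/-- Residue class count of the integers of S ⊆ B modulo the maximal ideal. -/
def resCard (ρ : AbsoluteValue B ℝ) (S : Set B) : ℕ :=
  Nat.card (Quot (fun x y : {b : B // b ∈ S ∧ ρ b ≤ 1} => ρ (x.1 - y.1) < 1))

/-- x represents an element of ℂ_r, the centralizer of the image of O_L in
O_B/m_B^r: x is integral and commutes with every element of O_L modulo m_B^r. -/
def inResCentralizer (ρ : AbsoluteValue B ℝ) (L : Subring B) (πB : B)
    (r : ℕ) (x : B) : Prop :=
  ρ x ≤ 1 ∧ ∀ l ∈ L, ρ l ≤ 1 → ρ (x * l - l * x) ≤ ρ πB ^ r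

/-- y is a child (in the full rose FR(L)) of the level-r vertex represented by
x: y is a lift of x to a vertex of level r+1, i.e. y ≡ x mod m_B^r and y
represents an element of ℂ_{r+1}. -/
def isChild (ρ : AbsoluteValue B ℝ) (L : Subring B) (πB : B)
    (r : ℕ) (x y : B) : Prop :=
  ρ (y - x) ≤ ρ πB ^ r ∧ inResCentralizer ρ L πB (r + 1) y

/-! ### An identity in a ring with a twisted uniformizer -/
section AbstractRing
variable {R : Type*} [Ring R]

/-- Iterated composition of the operators `b ↦ b * X - y k * b`. -/
def opIter (X : R) (y : ℕ → R) : ℕ → R → R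
  | 0, b => b
  | (l + 1), b => opIter X y l b * X - y l * opIter X y l b

lemma opIter_zero_arg (X : R) (y : ℕ → R) (l : ℕ) : opIter X y l 0 = 0 := by
  induction l with
  | zero => rfl
  | succ l ih => simp [opIter, ih]

lemma opIter_add (X : R) (y : ℕ → R) (l : ℕ) (a b : R) :
    opIter X y l (a + b) = opIter X y l a + opIter X y l b := by
  induction l with
  | zero => rfl
  | succ l ih => simp only [opIter, ih]; noncomm_ring

lemma opIter_sum (X : R) (y : ℕ → R) (l : ℕ) (s : Finset ℕ) (g : ℕ → R) :
    opIter X y l (∑ i ∈ s, g i) = ∑ i ∈ s, opIter X y l (g i) := by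
  induction s using Finset.induction_on with
  | empty => simp [opIter_zero_arg]
  | insert a s ha ih => rw [Finset.sum_insert ha, Finset.sum_insert ha, opIter_add, ih]

lemma opIter_coeff (X : R) (y : ℕ → R) (l : ℕ) :
    ∃ c : ℕ → R, c l = 1 ∧ (∀ k, l < k → c k = 0) ∧
      ∀ b, opIter X y l b = ∑ k ∈ Finset.range (l + 1), c k * b * X ^ k := by
  induction l with
  | zero =>
    refine ⟨fun k => if k = 0 then 1 else 0, by simp, fun k hk => by simp [hk.ne'], ?_⟩
    intro b; simp [opIter]
  | succ l ih =>
    obtain ⟨c, h1, h0, hc⟩ := ih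
    refine ⟨fun k => (if k = 0 then 0 else c (k - 1)) - y l * c k, ?_, ?_, ?_⟩
    · simp [h1, h0]
    · intro k hk
      have : k ≠ 0 := by omega
      simp [this, h0 k (by omega), h0 (k - 1) (by omega)]
    · intro b
      simp only [opIter, hc b, sub_mul, Finset.sum_sub_distrib]
      congr 1
      · rw [Finset.sum_range_succ' _ (l + 1)]
        simp [Finset.sum_mul, pow_succ, mul_assoc]
      · rw [Finset.sum_range_succ _ (l + 1), h0 (l + 1) (by omega), Finset.mul_sum]
        simp [mul_assoc]

lemma opIter_monomial (X P : R) (y : ℕ → R) (i : ℕ) (hX : P ^ i * X = y i * P ^ i)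
    (hy : ∀ j k, Commute (y j) (y k)) (l : ℕ) (m : R) (hm : ∀ k, Commute m (y k)) :
    ∃ m', opIter X y l (m * P ^ i) = m' * P ^ i ∧ (∀ k, Commute m' (y k)) ∧
      ((∃ k < l, y i = y k) → m' = 0) := by
  induction l with
  | zero => exact ⟨m, rfl, hm, by simp⟩
  | succ l ih =>
    obtain ⟨m', h1, h2, h3⟩ := ih
    refine ⟨m' * (y i - y l), ?_, ?_, ?_⟩
    · simp only [opIter, h1]
      rw [mul_assoc m', hX, mul_sub, (h2 l).eq, sub_mul]
      simp [mul_assoc]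
    · intro k
      exact (h2 k).mul_left ((hy i k).sub_left (hy l k))
    · rintro ⟨k, hk, hik⟩
      rcases Nat.lt_succ_iff_lt_or_eq.mp hk with h | rfl
      · rw [h3 ⟨k, h, hik⟩, zero_mul]
      · rw [hik, sub_self, mul_zero]

lemma twisted_identity (T P X : R) (s n' Q N : ℕ) (hs0 : 0 < s) (hn' : 0 < n')
    (hQ : 2 ≤ Q)
    (hT : T ^ (Q - 1) = 1) (hPT : P * T = T ^ s * P) (hs : T ^ (s ^ n') = T)
    (hX : Commute T X)
    (gen : ∀ b : R, ∃ t : ℕ → R, (∀ i, t i = 0 ∨ ∃ k, t i = T ^ k) ∧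
      b = ∑ i ∈ Finset.range N, t i * P ^ i)
    (hunit : ∀ i, ¬ n' ∣ i → IsUnit (T - T ^ (s ^ i)))
    (hQu : IsUnit (((Q - 1 : ℕ) : R))) :
    ∃ c : ℕ → R, c n' = 1 ∧ ∀ b, ∑ k ∈ Finset.range (n' + 1), c k * b * X ^ k = 0 := by
  have hsi : ∀ i, n' ∣ i → T ^ (s ^ i) = T := by
    rintro _ ⟨c, rfl⟩
    induction c with
    | zero => simp
    | succ c ih => rw [Nat.mul_succ, pow_add, pow_mul, ih, hs]
  have hPTi : ∀ i, P ^ i * T = T ^ (s ^ i) * P ^ i := by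
    intro i
    induction i with
    | zero => simp
    | succ i ih =>
      have h2 : ∀ a, P * T ^ a = (T ^ s) ^ a * P := by
        intro a
        have : SemiconjBy P T (T ^ s) := hPT
        exact (this.pow_right a).eq
      rw [pow_succ', mul_assoc, ih, ← mul_assoc, h2, ← pow_mul, pow_succ' s, mul_assoc]
  have hPTia : ∀ i a, P ^ i * T ^ a = (T ^ a) ^ (s ^ i) * P ^ i := by
    intro i a
    have : SemiconjBy (P ^ i) T (T ^ (s ^ i)) := hPTi i
    rw [(this.pow_right a).eq, ← pow_mul, ← pow_mul, mul_comm]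
  have hPt : ∀ i (t : R), (t = 0 ∨ ∃ k, t = T ^ k) → P ^ i * t = t ^ (s ^ i) * P ^ i := by
    rintro i t (rfl | ⟨k, rfl⟩)
    · rw [zero_pow (by positivity)]; simp
    · exact hPTia i k
  obtain ⟨t, ht, hXt⟩ := gen X
  have htT : ∀ i k, Commute (t i) (T ^ k) := by
    intro i k
    rcases ht i with h | ⟨a, h⟩ <;> rw [h]
    · exact Commute.zero_left _
    · exact Commute.pow_pow_self T a k
  -- X in the commutative subring
  have hX2 : X = ∑ i ∈ Finset.range N, (if n' ∣ i then t i * P ^ i else 0) := by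
    have e1 : ((Q - 1 : ℕ) : R) * X =
        ∑ j ∈ Finset.range (Q - 1), T ^ j * X * T ^ (Q - 1 - j) := by
      have : ∀ j ∈ Finset.range (Q - 1), T ^ j * X * T ^ (Q - 1 - j) = X := by
        intro j hj
        rw [(hX.pow_left j).eq, mul_assoc, ← pow_add,
          Nat.add_sub_cancel' (Finset.mem_range.mp hj).le, hT, mul_one]
      rw [Finset.sum_congr rfl this]; simp
    have e2 : ∀ i, ∑ j ∈ Finset.range (Q - 1), T ^ j * (t i * P ^ i) * T ^ (Q - 1 - j) =
        ((Q - 1 : ℕ) : R) * (if n' ∣ i then t i * P ^ i else 0) := by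
      intro i
      have e3 : ∀ j ∈ Finset.range (Q - 1), T ^ j * (t i * P ^ i) * T ^ (Q - 1 - j) =
          t i * (T ^ j * (T ^ (s ^ i)) ^ (Q - 1 - 1 - j)) * T ^ (s ^ i) * P ^ i := by
        intro j hj
        have hj' := Finset.mem_range.mp hj
        rw [mul_assoc, mul_assoc (t i) (P ^ i), hPTia, ← mul_assoc, ← mul_assoc,
          ← (htT i j).eq]
        have : Q - 1 - j = (Q - 1 - 1 - j) + 1 := by omega
        rw [this]
        simp only [mul_assoc]
        congr 2
        rw [← mul_assoc _ (T ^ (s^i)) (P ^ i)]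
        congr 1
        rw [← pow_mul, ← pow_mul, ← pow_add]
        congr 1; ring
      rw [Finset.sum_congr rfl e3, ← Finset.sum_mul, ← Finset.sum_mul, ← Finset.mul_sum]
      split_ifs with hd
      · have e4 : ∀ j ∈ Finset.range (Q - 1), T ^ j * (T ^ (s ^ i)) ^ (Q - 1 - 1 - j) * T = 1 := by
          intro j hj
          have hj' := Finset.mem_range.mp hj
          rw [hsi i hd, ← pow_add, ← pow_succ, ← hT]
          congr 1; omega
        rw [hsi i hd, mul_assoc (t i), Finset.sum_mul]
        rw [hsi i hd] at e4
        rw [Finset.sum_congr rfl e4]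
        simp only [Finset.sum_const, Finset.card_range, nsmul_eq_mul, mul_one]
        rw [← mul_assoc, (Nat.cast_commute (Q - 1) (t i)).eq]
      · have hc : Commute T (T ^ (s ^ i)) := Commute.self_pow T _
        have := hc.mul_geom_sum₂ (Q - 1)
        rw [hT, ← pow_mul, mul_comm (s ^ i), pow_mul, hT, one_pow, sub_self] at this
        rw [(hunit i hd).mul_right_eq_zero.mp this]
        simp
    apply hQu.mul_left_cancel
    rw [e1, Finset.mul_sum]
    conv_lhs =>
      enter [2, j]
      rw [hXt, Finset.mul_sum, Finset.sum_mul]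
    rw [Finset.sum_comm]
    exact Finset.sum_congr rfl fun i _ => e2 i
  let y : ℕ → R := fun k => ∑ i ∈ Finset.range N, (if n' ∣ i then t i ^ (s ^ k) * P ^ i else 0)
  have hPX : ∀ k, P ^ k * X = y k * P ^ k := by
    intro k
    conv_lhs => rw [hX2]
    simp only [y]
    rw [Finset.mul_sum, Finset.sum_mul]
    refine Finset.sum_congr rfl fun i _ => ?_
    split_ifs
    · rw [← mul_assoc, hPt k (t i) (ht i), mul_assoc, mul_assoc, ← pow_add, ← pow_add, add_comm]
    · simp
  have hTP : ∀ i a, n' ∣ i → Commute (T ^ a) (P ^ i) := by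
    intro i a hi
    apply Commute.pow_left
    have := hPTi i
    rw [hsi i hi] at this
    exact this.symm
  have hcT : ∀ i j a, n' ∣ j → Commute (t i ^ a) (P ^ j) := by
    intro i j a hj
    apply Commute.pow_left
    rcases ht i with h | ⟨b, h⟩ <;> rw [h]
    · exact Commute.zero_left _
    · exact hTP j b hj
  have htt : ∀ i j, Commute (t i) (t j) := by
    intro i j
    rcases ht j with h | ⟨b, h⟩ <;> rw [h]
    · exact Commute.zero_right _
    · exact htT i b
  have hTy : ∀ a k, Commute (T ^ a) (y k) := by
    intro a k
    refine Commute.sum_right _ _ _ fun i _ => ?_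
    split_ifs with hi
    · exact (((htT i a).symm).pow_right _).mul_right (hTP i a hi)
    · exact Commute.zero_right _
  have hyy : ∀ j k, Commute (y j) (y k) := by
    intro j k
    refine Commute.sum_right _ _ _ fun i _ => ?_
    refine Commute.sum_left _ _ _ fun i' _ => ?_
    split_ifs with h2 h1
    · refine Commute.mul_right (Commute.mul_left ((htt i' i).pow_pow _ _) ?_)
        (Commute.mul_left (hcT _ _ _ h1) (Commute.pow_pow_self _ _ _))
      exact (hcT _ _ _ h2).symm
    · exact Commute.zero_right _
    · exact Commute.zero_left _
    · exact Commute.zero_right _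
  have hper : ∀ k, y k = y (k % n') := by
    intro k
    simp only [y]
    refine Finset.sum_congr rfl fun i _ => ?_
    split_ifs
    · congr 1
      rcases ht i with h | ⟨b, h⟩ <;> rw [h]
      · rw [zero_pow (by positivity), zero_pow (by positivity)]
      · have : T ^ (s ^ k) = T ^ (s ^ (k % n')) := by
          conv_lhs => rw [← Nat.div_add_mod k n', pow_add, pow_mul, hsi _ (Dvd.intro _ rfl)]
        rw [← pow_mul, mul_comm, pow_mul, this, ← pow_mul, mul_comm, pow_mul]
    · rfl
  obtain ⟨c, hc1, -, hc⟩ := opIter_coeff X y n'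
  refine ⟨c, hc1, fun b => ?_⟩
  rw [← hc b]
  obtain ⟨u, hu, rfl⟩ := gen b
  rw [opIter_sum]
  refine Finset.sum_eq_zero fun i _ => ?_
  have hm : ∀ k, Commute (u i) (y k) := by
    intro k
    rcases hu i with h | ⟨b, h⟩ <;> rw [h]
    · exact Commute.zero_left _
    · exact hTy b k
  obtain ⟨m', h1, -, h3⟩ := opIter_monomial X P y i (hPX i) hyy n' (u i) hm
  rw [h1, h3 ⟨i % n', Nat.mod_lt _ hn', hper i⟩, zero_mul]

end AbstractRing

section Density
variable {B : Type*} [DivisionRing B]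

/-- Sums of two-sided multiplications. -/
inductive MulOp : (B → B) → Prop
  | base (u v : B) : MulOp (fun x => u * x * v)
  | add {f g : B → B} : MulOp f → MulOp g → MulOp (fun x => f x + g x)

lemma MulOp.zero : MulOp (fun _ : B => (0 : B)) := by
  simpa using MulOp.base (0 : B) 0

lemma MulOp.left {f : B → B} (hf : MulOp f) (d : B) : MulOp (fun x => d * f x) := by
  induction hf with
  | base u v => simpa [mul_assoc] using MulOp.base (d * u) v
  | add _ _ h1 h2 => simpa [mul_add] using h1.add h2

lemma MulOp.right {f : B → B} (hf : MulOp f) (d : B) : MulOp (fun x => f x * d) := by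
  induction hf with
  | base u v => simpa [mul_assoc] using MulOp.base u (v * d)
  | add _ _ h1 h2 => simpa [add_mul] using h1.add h2

lemma MulOp.sub {f g : B → B} (hf : MulOp f) (hg : MulOp g) : MulOp (fun x => f x - g x) := by
  simpa [sub_eq_add_neg] using hf.add (hg.left (-1))

lemma MulOp.sum {ι : Type*} (s : Finset ι) (f : ι → B → B) (hf : ∀ i ∈ s, MulOp (f i)) :
    MulOp (fun x => ∑ i ∈ s, f i x) := by
  classical
  induction s using Finset.induction_on with
  | empty => simpa using MulOp.zero
  | insert a s ha ih =>
    simp only [Finset.sum_insert ha]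
    exact (hf a (by simp)).add (ih fun i hi => hf i (by simp [hi]))

lemma MulOp.map_add {f : B → B} (hf : MulOp f) (x y : B) : f (x + y) = f x + f y := by
  induction hf with
  | base u v => noncomm_ring
  | add _ _ h1 h2 => simp only [h1, h2]; abel

lemma MulOp.map_smul {f : B → B} (hf : MulOp f) (c : Subring.center B) (x : B) :
    f (c • x) = c • f x := by
  induction hf with
  | base u v =>
    have := Subring.mem_center_iff.mp c.2 u
    simp only [Subring.smul_def, smul_eq_mul]
    rw [← mul_assoc, this]; simp [mul_assoc]
  | add _ _ h1 h2 => simp only [h1, h2, smul_add]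

lemma MulOp.map_zero {f : B → B} (hf : MulOp f) : f 0 = 0 := by
  have := hf.map_add 0 0
  simpa using this

lemma MulOp.span_zero {f : B → B} (hf : MulOp f) (s : Set B) (h : ∀ x ∈ s, f x = 0)
    (a : B) (ha : a ∈ Submodule.span (Subring.center B) s) : f a = 0 := by
  induction ha using Submodule.span_induction with
  | mem x hx => exact h x hx
  | zero => exact hf.map_zero
  | add x y _ _ hx hy => rw [hf.map_add, hx, hy, add_zero]
  | smul c x _ hx => rw [hf.map_smul, hx, smul_zero]

lemma mulOp_density (m : ℕ) : ∀ (s : Finset B), s.card = m → ∀ a : B,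
    a ∉ Submodule.span (Subring.center B) (s : Set B) →
    ∃ φ : B → B, MulOp φ ∧ (∀ x ∈ s, φ x = 0) ∧ φ a = 1 := by
  classical
  induction m with
  | zero =>
    intro s hs a ha
    rw [Finset.card_eq_zero] at hs
    subst hs
    have ha0 : a ≠ 0 := by rintro rfl; exact ha (Submodule.zero_mem _)
    exact ⟨_, MulOp.base 1 a⁻¹, by simp, by simp [ha0]⟩
  | succ m ih =>
    intro s hs a ha
    by_cases h : ∃ i ∈ s, i ∈ Submodule.span (Subring.center B) ((s.erase i : Finset B) : Set B)
    · obtain ⟨i, hi, his⟩ := h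
      have ha' : a ∉ Submodule.span (Subring.center B) ((s.erase i : Finset B) : Set B) :=
        fun h => ha (Submodule.span_mono (by simp) h)
      obtain ⟨φ, h1, h2, h3⟩ := ih (s.erase i) (by rw [Finset.card_erase_of_mem hi, hs]; rfl) a ha'
      refine ⟨φ, h1, fun x hx => ?_, h3⟩
      by_cases hxi : x = i
      · rw [hxi]; exact h1.span_zero _ (fun x hx => h2 x hx) _ his
      · exact h2 x (Finset.mem_erase.mpr ⟨hxi, hx⟩)
    · push Not at h
      have h' : ∀ i : B, ∃ φ : B → B, i ∈ s → MulOp φ ∧ (∀ x ∈ s.erase i, φ x = 0) ∧ φ i = 1 := by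
        intro i
        by_cases hi : i ∈ s
        · obtain ⟨φ, h1⟩ := ih (s.erase i) (by rw [Finset.card_erase_of_mem hi, hs]; rfl) i (h i hi)
          exact ⟨φ, fun _ => h1⟩
        · exact ⟨id, fun h => absurd h hi⟩
      choose φ hφ using h'
      by_contra hcon
      have key : ∀ ψ : B → B, MulOp ψ → (∀ x ∈ s, ψ x = 0) → ψ a = 0 := by
        intro ψ h1 h2
        by_contra h3
        exact hcon ⟨_, h1.left (ψ a)⁻¹, fun x hx => by simp [h2 x hx], by simp [h3]⟩
      have hval : ∀ i ∈ s, ∀ x ∈ s, φ i x = if x = i then 1 else 0 := by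
        intro i hi x hx
        split_ifs with hxi
        · rw [hxi]; exact (hφ i hi).2.2
        · exact (hφ i hi).2.1 x (Finset.mem_erase.mpr ⟨hxi, hx⟩)
      have hcent : ∀ i ∈ s, φ i a ∈ Subring.center B := by
        intro i hi
        rw [Subring.mem_center_iff]
        intro d
        have := key _ (((hφ i hi).1.left d).sub ((hφ i hi).1.right d)) (fun x hx => by
          rw [hval i hi x hx]; split_ifs <;> simp)
        exact sub_eq_zero.mp this
      have hfin := key _ ((MulOp.base (1 : B) 1).sub
        (MulOp.sum s (fun i x => φ i x * i) (fun i hi => (hφ i hi).1.right i))) (fun x hx => by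
          have : ∀ i ∈ s, φ i x * i = if x = i then x else 0 := by
            intro i hi
            rw [hval i hi x hx]; split_ifs with h <;> simp [h]
          rw [Finset.sum_congr rfl this]; simp [hx])
      apply ha
      have : a = ∑ i ∈ s, φ i a * i := by simpa [sub_eq_zero] using hfin
      rw [this]
      refine Submodule.sum_mem _ fun i hi => ?_
      exact Submodule.smul_mem _ (⟨φ i a, hcent i hi⟩ : Subring.center B)
        (Submodule.subset_span hi)

end Density

section FF
variable {F : Type*} [Field F] [Finite F]

lemma ff_generator : ∃ w : F, w ≠ 0 ∧ ∀ x : F, x ≠ 0 → ∃ k : ℕ, x = w ^ k := by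
  obtain ⟨g, hg⟩ := IsCyclic.exists_generator (α := Fˣ)
  refine ⟨g, g.ne_zero, fun x hx => ?_⟩
  obtain ⟨k, hk⟩ := (isOfFinOrder_of_finite g).mem_powers_iff_mem_zpowers.mpr (hg (Units.mk0 x hx))
  exact ⟨k, by simpa using (congrArg Units.val hk).symm⟩

lemma ff_aut (K : Subfield F) (q n : ℕ) (hq : 2 ≤ q) (hK : Nat.card K = q)
    (hF : Nat.card F = q ^ n) (σ : F →+* F) (hfix : ∀ x ∈ K, σ x = x) :
    ∃ j n' : ℕ, 0 < n' ∧ (∀ x, σ x = x ^ (q ^ j)) ∧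
      (∀ i, n' ∣ i ↔ ∀ x : F, x ^ ((q ^ j) ^ i) = x) ∧
      (n ≤ n' → ∃ i, ∀ x : F, x ^ q = x ^ ((q ^ j) ^ i)) ∧ Module.finrank K F = n := by
  classical
  have : Fintype F := Fintype.ofFinite F
  have : Fintype K := Fintype.ofFinite K
  have hfr : Module.finrank K F = n := by
    have := Module.natCard_eq_pow_finrank (K := K) (V := F)
    rw [hF, hK] at this
    exact (Nat.pow_right_injective hq this).symm
  let σ' : F →ₐ[K] F := { σ with commutes' := fun x => hfix x x.2 }
  let τ : F ≃ₐ[K] F := AlgEquiv.ofBijective σ' (Finite.injective_iff_bijective.mp σ'.injective)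
  have hτ : ∀ x, τ x = σ x := fun x => rfl
  have hqc : Fintype.card K = q := by rw [← hK, Nat.card_eq_fintype_card]
  obtain ⟨⟨j, hj⟩, hjτ⟩ := (FiniteField.bijective_frobeniusAlgEquivOfAlgebraic_pow K F).2 τ
  have hσ : ∀ x, τ x = x ^ (q ^ j) := by
    intro x
    rw [← hjτ]
    simp only [AlgEquiv.coe_pow, FiniteField.coe_frobeniusAlgEquivOfAlgebraic_iterate, hqc]
  have hσi : ∀ i x, (τ ^ i) x = x ^ ((q ^ j) ^ i) := by
    intro i
    induction i with
    | zero => simp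
    | succ i ih => intro x; rw [pow_succ', AlgEquiv.mul_apply, ih, hσ, ← pow_mul, pow_succ]
  refine ⟨j, orderOf τ, orderOf_pos τ, hσ, ?_, ?_, hfr⟩
  · intro i
    rw [orderOf_dvd_iff_pow_eq_one]
    constructor
    · intro h x; rw [← hσi, h]; rfl
    · intro h; ext x; rw [hσi, h]; rfl
  · intro hn
    have hcard : Nat.card (F ≃ₐ[K] F) = n := by
      rw [IsGalois.card_aut_eq_finrank, hfr]
    have htop : Subgroup.zpowers τ = ⊤ := by
      apply Subgroup.eq_top_of_le_card
      rw [Nat.card_zpowers, hcard]; exact hn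
    have hmem : FiniteField.frobeniusAlgEquivOfAlgebraic K F ∈ Subgroup.zpowers τ := by
      rw [htop]; trivial
    obtain ⟨i, hi⟩ := (isOfFinOrder_of_finite τ).mem_powers_iff_mem_zpowers.mpr hmem
    refine ⟨i, fun x => ?_⟩
    rw [← hσi]
    have := DFunLike.congr_fun hi x
    simp only at this
    rw [this, FiniteField.coe_frobeniusAlgEquivOfAlgebraic, hqc]

/-- A primitive element has no nontrivial relation of small degree. -/
lemma ff_minpoly (K : Subfield F) (w : F) (hw : ∀ x : F, x ≠ 0 → ∃ k : ℕ, x = w ^ k)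
    (m : ℕ) (hm : m < Module.finrank K F) (e : ℕ → K)
    (he : ∑ k ∈ Finset.range (m + 1), (e k : F) * w ^ k = 0) : ∀ k ∈ Finset.range (m + 1), e k = 0 := by
  have htop : IntermediateField.adjoin K {w} = ⊤ := by
    rw [eq_top_iff]
    intro x _
    by_cases hx : x = 0
    · rw [hx]; exact zero_mem _
    · obtain ⟨k, rfl⟩ := hw x hx
      exact pow_mem (IntermediateField.mem_adjoin_simple_self K w) k
  have hint : IsIntegral K w := Algebra.IsIntegral.isIntegral w
  have hdeg : (minpoly K w).natDegree = Module.finrank K F := by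
    rw [← IntermediateField.adjoin.finrank hint, htop, IntermediateField.finrank_top']
  let p : Polynomial K := ∑ k ∈ Finset.range (m + 1), Polynomial.C (e k) * Polynomial.X ^ k
  have hp : Polynomial.aeval w p = 0 := by
    simp only [p, map_sum, map_mul, map_pow, Polynomial.aeval_C, Polynomial.aeval_X]
    exact he
  have hp0 : p = 0 := by
    by_contra h
    have h1 := Polynomial.natDegree_le_natDegree (minpoly.degree_le_of_ne_zero K w h hp)
    have h2 : p.natDegree ≤ m := by
      apply Polynomial.natDegree_sum_le_of_forall_le
      intro k hk
      exact (Polynomial.natDegree_C_mul_X_pow_le _ _).trans (by simp at hk; omega)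
    omega
  intro k hk
  have : p.coeff k = e k := by
    simp only [p, Polynomial.finsetSum_coeff, Polynomial.coeff_C_mul_X_pow]
    simp at hk
    simp; omega
  rw [← this, hp0]; simp

lemma dvd_of_pow_fix (𝕃 : Subfield F) (q f r : ℕ) (hq : 2 ≤ q) (hL : Nat.card 𝕃 = q ^ f)
    (h : ∀ x ∈ 𝕃, x ^ (q ^ r) = x) : f ∣ r := by
  have hfin : Finite 𝕃 := inferInstance
  have hc : Nat.card 𝕃ˣ = q ^ f - 1 := by rw [Nat.card_units, hL]
  obtain ⟨g, hg⟩ := IsCyclic.exists_generator (α := 𝕃ˣ)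
  have ho : orderOf g = q ^ f - 1 := by rw [orderOf_eq_card_of_forall_mem_zpowers hg, hc]
  have hqr : 1 ≤ q ^ r := Nat.one_le_pow _ _ (by omega)
  have h1 : g ^ (q ^ r - 1) = 1 := by
    have h2 : g ^ (q ^ r) = g := by
      ext; simpa using h ((g : 𝕃) : F) (g : 𝕃).2
    have h3 : g ^ (q ^ r - 1) * g = 1 * g := by
      rw [← pow_succ, Nat.sub_add_cancel hqr, h2, one_mul]
    exact mul_right_cancel h3
  have h2 := orderOf_dvd_of_pow_eq_one h1
  rw [ho] at h2
  have h3 := Nat.pow_sub_one_gcd_pow_sub_one q f r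
  rw [Nat.gcd_eq_left h2] at h3
  have hqf : 1 ≤ q ^ f := Nat.one_le_pow _ _ (by omega)
  have hqg : 1 ≤ q ^ (Nat.gcd f r) := Nat.one_le_pow _ _ (by omega)
  have h4 : q ^ f = q ^ Nat.gcd f r := by omega
  have := Nat.pow_right_injective hq h4
  rw [this]; exact Nat.gcd_dvd_right f r
end FF
section Val
universe u
variable {B : Type u} [DivisionRing B]

/-- The valuation hypotheses. -/
structure VCtx (ρ : AbsoluteValue B ℝ) (π : B) : Prop where
  na : IsNonarchimedean ρ
  pos : 0 < ρ π
  lt : ρ π < 1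
  mx : ∀ x : B, ρ x < 1 → ρ x ≤ ρ π

variable {ρ : AbsoluteValue B ℝ} {π : B}

lemma VCtx.add_le (h : VCtx ρ π) {x y : B} {c : ℝ} (hx : ρ x ≤ c) (hy : ρ y ≤ c) :
    ρ (x + y) ≤ c := (h.na x y).trans (max_le hx hy)

lemma VCtx.sub_le (h : VCtx ρ π) {x y : B} {c : ℝ} (hx : ρ x ≤ c) (hy : ρ y ≤ c) :
    ρ (x - y) ≤ c := by
  rw [sub_eq_add_neg]; exact h.add_le hx (by rwa [ρ.map_neg])

lemma VCtx.sum_le (h : VCtx ρ π) {ι : Type*} (s : Finset ι) (g : ι → B) {c : ℝ} (hc : 0 ≤ c)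
    (hg : ∀ i ∈ s, ρ (g i) ≤ c) : ρ (∑ i ∈ s, g i) ≤ c := by
  classical
  induction s using Finset.induction_on with
  | empty => simpa using hc
  | insert a s ha ih =>
    rw [Finset.sum_insert ha]
    exact h.add_le (hg a (by simp)) (ih fun i hi => hg i (by simp [hi]))

lemma VCtx.ppos (h : VCtx ρ π) (N : ℕ) : 0 < ρ π ^ N := pow_pos h.pos N
lemma VCtx.ple (h : VCtx ρ π) (N : ℕ) : ρ π ^ N ≤ 1 := pow_le_one₀ h.pos.le h.lt.le
lemma VCtx.pne (h : VCtx ρ π) : π ≠ 0 := by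
  rintro rfl; simpa using h.pos

lemma VCtx.mul_le_left (_ : VCtx ρ π) {x y : B} {c : ℝ} (hx : ρ x ≤ 1) (hy : ρ y ≤ c) :
    ρ (x * y) ≤ c := by
  rw [ρ.map_mul]
  calc ρ x * ρ y ≤ 1 * ρ y := by gcongr
    _ ≤ c := by simpa using hy

lemma VCtx.mul_le_right (_ : VCtx ρ π) {x y : B} {c : ℝ} (hx : ρ x ≤ 1) (hy : ρ y ≤ c) :
    ρ (y * x) ≤ c := by
  rw [ρ.map_mul]
  calc ρ y * ρ x ≤ ρ y * 1 := by gcongr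
    _ ≤ c := by simpa using hy

/-- The valuation ring. -/
def intRing (h : VCtx ρ π) : Subring B where
  carrier := {x | ρ x ≤ 1}
  mul_mem' := fun ha hb => h.mul_le_left ha hb
  one_mem' := by simp
  add_mem' := fun ha hb => h.add_le ha hb
  zero_mem' := by simp
  neg_mem' := fun {x} hx => by simpa [ρ.map_neg] using hx

/-- Powers of the maximal ideal. -/
def mIdeal (h : VCtx ρ π) (N : ℕ) : Ideal (intRing h) where
  carrier := {x | ρ (x : B) ≤ ρ π ^ N}
  add_mem' := fun ha hb => h.add_le ha hb
  zero_mem' := by simp [(h.ppos N).le]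
  smul_mem' := fun c x hx => h.mul_le_left c.2 hx

lemma mem_mIdeal (h : VCtx ρ π) (N : ℕ) (x : intRing h) :
    x ∈ mIdeal h N ↔ ρ (x : B) ≤ ρ π ^ N := Iff.rfl

instance (h : VCtx ρ π) (N : ℕ) : (mIdeal h N).IsTwoSided where
  mul_mem_of_left := fun {a} b ha => by
    rw [mem_mIdeal] at ha ⊢
    exact h.mul_le_right b.2 ha

lemma isUnit_int (h : VCtx ρ π) (x : intRing h) (hx : ¬ ρ (x : B) < 1) : IsUnit x := by
  have h1 : ρ (x : B) = 1 := le_antisymm x.2 (not_lt.mp hx)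
  have h0 : (x : B) ≠ 0 := by intro h0; rw [h0] at h1; simp at h1
  have h2 : ρ ((x : B)⁻¹) ≤ 1 := by rw [map_inv₀, h1]; simp
  refine ⟨⟨x, ⟨(x : B)⁻¹, h2⟩, ?_, ?_⟩, rfl⟩
  · ext; simp [h0]
  · ext; simp [h0]

lemma resCard_eq (ρ : AbsoluteValue B ℝ) (S : Set B) {Y : Type*}
    (g : {b : B // b ∈ S ∧ ρ b ≤ 1} → Y)
    (hg : ∀ x y, g x = g y ↔ ρ (x.1 - y.1) < 1) : resCard ρ S = Nat.card (Set.range g) := by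
  unfold resCard
  let G : Quot (fun x y : {b : B // b ∈ S ∧ ρ b ≤ 1} => ρ (x.1 - y.1) < 1) → Y :=
    Quot.lift g (fun x y hxy => (hg x y).mpr hxy)
  have hG : Function.Injective G := by
    rintro ⟨x⟩ ⟨y⟩ hxy
    exact Quot.sound ((hg x y).mp hxy)
  have hr : Set.range G = Set.range g := by
    ext z; constructor
    · rintro ⟨⟨x⟩, rfl⟩; exact ⟨x, rfl⟩
    · rintro ⟨x, rfl⟩; exact ⟨Quot.mk _ x, rfl⟩
  rw [← hr, Nat.card_range_of_injective hG]

lemma exists_residue (h : VCtx ρ π) (m : ℕ) (hm : 0 < m)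
    (hres : resCard ρ (Set.univ : Set B) = m) :
    ∃ (F : Type u) (_ : Field F) (res : intRing h →+* F), Finite F ∧ Function.Surjective res ∧
      ∀ x : intRing h, res x = 0 ↔ ρ (x : B) < 1 := by
  have hlt : ∀ x : intRing h, x ∈ mIdeal h 1 ↔ ρ (x : B) < 1 := by
    intro x
    rw [mem_mIdeal, pow_one]
    exact ⟨fun hx => hx.trans_lt h.lt, fun hx => h.mx _ hx⟩
  have hc := resCard_eq ρ Set.univ (fun b => Ideal.Quotient.mk (mIdeal h 1) ⟨b.1, b.2.2⟩)
    (fun x y => by rw [Ideal.Quotient.eq, hlt]; rfl)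
  have hr : Set.range (fun b : {b : B // b ∈ (Set.univ : Set B) ∧ ρ b ≤ 1} =>
      Ideal.Quotient.mk (mIdeal h 1) ⟨b.1, b.2.2⟩) = Set.univ := by
    rw [Set.eq_univ_iff_forall]
    intro z
    obtain ⟨x, rfl⟩ := Ideal.Quotient.mk_surjective z
    exact ⟨⟨x.1, trivial, x.2⟩, rfl⟩
  rw [hr, hres, Nat.card_univ] at hc
  have hfin : Finite (intRing h ⧸ mIdeal h 1) := Nat.finite_of_card_ne_zero (by omega)
  have hnt : Nontrivial (intRing h ⧸ mIdeal h 1) := by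
    refine ⟨⟨0, 1, fun h01 => ?_⟩⟩
    have : (Ideal.Quotient.mk (mIdeal h 1)) 1 = 0 := by rw [map_one, h01]
    rw [Ideal.Quotient.eq_zero_iff_mem, hlt] at this
    simp at this
  have hu : ∀ a : intRing h ⧸ mIdeal h 1, IsUnit a ∨ a = 0 := by
    intro a
    obtain ⟨x, rfl⟩ := Ideal.Quotient.mk_surjective a
    by_cases hx : ρ (x : B) < 1
    · right; rw [Ideal.Quotient.eq_zero_iff_mem, hlt]; exact hx
    · left; exact (isUnit_int h x hx).map _
  let D : DivisionRing (intRing h ⧸ mIdeal h 1) := DivisionRing.ofIsUnitOrEqZero hu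
  refine ⟨intRing h ⧸ mIdeal h 1, littleWedderburn _, Ideal.Quotient.mk (mIdeal h 1), hfin,
    Ideal.Quotient.mk_surjective, fun x => ?_⟩
  rw [← hlt]; exact Ideal.Quotient.eq_zero_iff_mem

lemma VCtx.conj_int (h : VCtx ρ π) (x : B) : ρ (π * x * π⁻¹) = ρ x := by
  rw [ρ.map_mul, ρ.map_mul, map_inv₀]
  field_simp [h.pos.ne']

/-- Conjugation by the uniformizer. -/
def conjHom (h : VCtx ρ π) : intRing h →+* intRing h where
  toFun x := ⟨π * x * π⁻¹, by
    have : ρ (π * x * π⁻¹) ≤ 1 := by rw [h.conj_int]; exact x.2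
    exact this⟩
  map_one' := by ext; simp [h.pne]
  map_zero' := by ext; simp
  map_mul' x y := by ext; simp [mul_assoc, h.pne]
  map_add' x y := by ext; simp [mul_add, add_mul]

lemma conjHom_mul (h : VCtx ρ π) (x : intRing h) : ((conjHom h x : intRing h) : B) * π = π * x := by
  simp [conjHom, mul_assoc, h.pne]

lemma mulOp_bound (h : VCtx ρ π) {φ : B → B} (hφ : MulOp φ) :
    ∃ (J0 : ℕ) (C : ℝ), 0 ≤ C ∧ ∀ J, J0 ≤ J → ∀ (m : ℕ) (c : ℕ → B) (X : B) (ε : ℝ), 0 ≤ ε →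
      (∀ b, ρ b ≤ 1 → ρ (∑ k ∈ Finset.range m, c k * b * X ^ k) ≤ ε) →
      ρ (∑ k ∈ Finset.range m, c k * (π ^ J * φ (X ^ k))) ≤ C * ε := by
  induction hφ with
  | base u v =>
    have ht : Filter.Tendsto (fun J : ℕ => ρ π ^ J * ρ u) Filter.atTop (nhds (0 * ρ u)) :=
      (tendsto_pow_atTop_nhds_zero_of_lt_one h.pos.le h.lt).mul_const _
    rw [zero_mul] at ht
    obtain ⟨J0, hJ0⟩ := Filter.eventually_atTop.mp (ht.eventually_le_const (zero_lt_one))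
    refine ⟨J0, ρ v, ρ.nonneg v, fun J hJ m c X ε _ hb => ?_⟩
    have h1 := hb (π ^ J * u) (by rw [ρ.map_mul, map_pow]; exact hJ0 J hJ)
    have h2 : ∑ k ∈ Finset.range m, c k * (π ^ J * (u * X ^ k * v)) =
        (∑ k ∈ Finset.range m, c k * (π ^ J * u) * X ^ k) * v := by
      rw [Finset.sum_mul]; simp [mul_assoc]
    rw [h2, ρ.map_mul, mul_comm]
    gcongr
  | add _ _ h1 h2 =>
    obtain ⟨J1, C1, hC1, H1⟩ := h1
    obtain ⟨J2, C2, hC2, H2⟩ := h2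
    refine ⟨max J1 J2, max C1 C2, le_max_of_le_left hC1, fun J hJ m c X ε hε hb => ?_⟩
    simp only [mul_add, Finset.sum_add_distrib]
    apply h.add_le
    · exact (H1 J (by omega) m c X ε hε hb).trans (by gcongr; exact le_max_left _ _)
    · exact (H2 J (by omega) m c X ε hε hb).trans (by gcongr; exact le_max_right _ _)


lemma ker_le (h : VCtx ρ π) {F : Type u} [Field F] (res : intRing h →+* F)
    (hker : ∀ x : intRing h, res x = 0 ↔ ρ (x : B) < 1)
    (x : intRing h) : res x = 0 ↔ ρ (x : B) ≤ ρ π := by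
  rw [hker]; exact ⟨h.mx _, fun hx => hx.trans_lt h.lt⟩

lemma teich_step (h : VCtx ρ π) {F : Type u} [Field F] [Finite F] (res : intRing h →+* F)
    (hker : ∀ x : intRing h, res x = 0 ↔ ρ (x : B) < 1)
    (x y : intRing h) (hc : Commute x y) (j : ℕ) (hj : 1 ≤ j)
    (hxy : ρ ((x - y : intRing h) : B) ≤ ρ π ^ j) :
    ρ ((x ^ Nat.card F - y ^ Nat.card F : intRing h) : B) ≤ ρ π ^ (j + 1) := by
  have : Fintype F := Fintype.ofFinite F
  have hres : res x = res y := by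
    rw [← sub_eq_zero, ← map_sub, ker_le h res hker]
    exact hxy.trans (pow_le_of_le_one h.pos.le h.lt.le (by omega))
  rw [← hc.geom_sum₂_mul]
  have h0 : res (∑ i ∈ Finset.range (Nat.card F), x ^ i * y ^ (Nat.card F - 1 - i)) = 0 := by
    simp only [map_sum, map_mul, map_pow, hres]
    rw [Finset.sum_congr rfl (g := fun _ => res y ^ (Nat.card F - 1))]
    · simp
    · intro i hi
      rw [← pow_add]; congr 1; have := Finset.mem_range.mp hi; omega
  rw [ker_le h res hker] at h0
  push_cast at h0 hxy ⊢
  rw [ρ.map_mul, pow_succ']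
  gcongr

lemma teich_iter (h : VCtx ρ π) {F : Type u} [Field F] [Finite F] (res : intRing h →+* F)
    (hker : ∀ x : intRing h, res x = 0 ↔ ρ (x : B) < 1)
    (x y : intRing h) (hc : Commute x y) (N : ℕ)
    (hxy : res x = res y) :
    ρ ((x ^ (Nat.card F ^ N) - y ^ (Nat.card F ^ N) : intRing h) : B) ≤ ρ π ^ (N + 1) := by
  induction N with
  | zero =>
    rw [← sub_eq_zero, ← map_sub, ker_le h res hker] at hxy
    simpa using hxy
  | succ N ih =>
    have := teich_step h res hker (x ^ (Nat.card F ^ N)) (y ^ (Nat.card F ^ N))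
      (hc.pow_pow _ _) (N + 1) (by omega) ih
    rwa [← pow_mul, ← pow_mul, ← pow_succ] at this

lemma span_contra (h : VCtx ρ π) {F : Type u} [Field F] [Finite F] (res : intRing h →+* F)
    (K : Subfield F)
    (hK : ∀ z : intRing h, (z : B) ∈ Subring.center B → res z ∈ K)
    (X : intRing h) (hw : ∀ x : F, x ≠ 0 → ∃ k : ℕ, x = res X ^ k)
    (m : ℕ) (hm : m < Module.finrank K F) :
    (X : B) ^ m ∉ Submodule.span (Subring.center B)
      ((fun k : ℕ => (X : B) ^ k) '' (Finset.range m : Set ℕ)) := by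
  intro hmem
  rw [Submodule.mem_span_image_finset_iff_exists_fun'] at hmem
  obtain ⟨d, hd⟩ := hmem
  let e : ℕ → Subring.center B := fun k => if k < m then d k else -1
  have he : ∑ k ∈ Finset.range (m + 1), (e k : B) * (X : B) ^ k = 0 := by
    rw [Finset.sum_range_succ]
    have : ∑ k ∈ Finset.range m, (e k : B) * (X : B) ^ k = (X : B) ^ m := by
      rw [← hd]
      refine Finset.sum_congr rfl fun k hk => ?_
      simp only [e, if_pos (Finset.mem_range.mp hk)]
      rfl
    rw [this]; simp [e]
  obtain ⟨k0, hk0, hmax⟩ := Finset.exists_max_image (Finset.range (m + 1))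
    (fun k => ρ (e k : B)) ⟨0, by simp⟩
  have h1 : 1 ≤ ρ (e k0 : B) := by
    have := hmax m (by simp)
    simpa [e] using this
  have h0 : (e k0 : B) ≠ 0 := by
    intro h0; rw [h0] at h1; simp at h1; linarith
  have hint : ∀ k ∈ Finset.range (m + 1), ρ ((e k0 : B)⁻¹ * e k) ≤ 1 := by
    intro k hk
    rw [ρ.map_mul, map_inv₀, inv_mul_le_iff₀ (by linarith), mul_one]
    exact hmax k hk
  have hcen : ∀ k, (e k0 : B)⁻¹ * e k ∈ Subring.center B := fun k =>
    mul_mem (Set.inv_mem_center (e k0).2) (e k).2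
  let g : ℕ → intRing h := fun k =>
    if hk : k ∈ Finset.range (m + 1) then ⟨(e k0 : B)⁻¹ * e k, hint k hk⟩ else 0
  have hg : ∀ k ∈ Finset.range (m + 1), (g k : B) = (e k0 : B)⁻¹ * e k := by
    intro k hk; simp only [g, dif_pos hk]
  have hgc : ∀ k, (g k : B) ∈ Subring.center B := by
    intro k
    by_cases hk : k ∈ Finset.range (m + 1)
    · rw [hg k hk]; exact hcen k
    · simp only [g, dif_neg hk]; exact zero_mem _
  have hsum : ∑ k ∈ Finset.range (m + 1), g k * X ^ k = 0 := by
    apply Subtype.ext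
    push_cast
    rw [Finset.sum_congr rfl (fun k hk => by rw [hg k hk, mul_assoc]), ← Finset.mul_sum, he]
    simp
  have hz := ff_minpoly K (res X) hw m hm (fun k => ⟨res (g k), hK _ (hgc k)⟩) (by
    have := congrArg res hsum
    simpa using this) k0 hk0
  have hg1 : g k0 = 1 := by
    apply Subtype.ext
    rw [hg k0 hk0]; simp [h0]
  have hz' := congrArg Subtype.val hz
  simp [hg1] at hz'

lemma expand (h : VCtx ρ π) {F : Type u} [Field F] (res : intRing h →+* F)
    (hker : ∀ x : intRing h, res x = 0 ↔ ρ (x : B) < 1)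
    (T : intRing h) (hw : ∀ x : F, x ≠ 0 → ∃ k : ℕ, x = res T ^ k)
    (P : intRing h) (hP : ρ (P : B) = ρ π) (b : intRing h) (N : ℕ) :
    ∃ t : ℕ → intRing h, (∀ i, t i = 0 ∨ ∃ k, t i = T ^ k) ∧
      ρ ((b - ∑ i ∈ Finset.range N, t i * P ^ i : intRing h) : B) ≤ ρ π ^ N := by
  induction N with
  | zero => exact ⟨fun _ => 0, fun i => Or.inl rfl, by simpa using (show ρ (b : B) ≤ 1 from b.2)⟩
  | succ N ih =>
    obtain ⟨t, ht, hb⟩ := ih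
    set d : intRing h := b - ∑ i ∈ Finset.range N, t i * P ^ i with hd
    have hPne : (P : B) ≠ 0 := by
      intro h0; rw [h0] at hP; simp at hP; exact h.pne (by simpa using hP.symm)
    have hint : ρ ((d : B) * ((P : B) ^ N)⁻¹) ≤ 1 := by
      rw [ρ.map_mul, map_inv₀, map_pow, hP, mul_inv_le_iff₀ (h.ppos N), one_mul]
      exact hb
    let a : intRing h := ⟨(d : B) * ((P : B) ^ N)⁻¹, hint⟩
    have haP : a * P ^ N = d := by
      apply Subtype.ext; simp [a, hPne]
    obtain ⟨u, hu, hua⟩ : ∃ u : intRing h, (u = 0 ∨ ∃ k, u = T ^ k) ∧ res u = res a := by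
      by_cases ha : res a = 0
      · exact ⟨0, Or.inl rfl, by simp [ha]⟩
      · obtain ⟨k, hk⟩ := hw _ ha
        exact ⟨T ^ k, Or.inr ⟨k, rfl⟩, by rw [map_pow, hk]⟩
    refine ⟨fun i => if i = N then u else t i, fun i => ?_, ?_⟩
    · simp only
      split_ifs
      · exact hu
      · exact ht i
    · rw [Finset.sum_range_succ]
      rw [Finset.sum_congr rfl (g := fun i => t i * P ^ i) (fun i hi => by
        simp only [if_neg (Finset.mem_range.mp hi).ne])]
      simp only [if_true]
      rw [← sub_sub, ← hd, ← haP, ← sub_mul]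
      have : ρ ((a - u : intRing h) : B) ≤ ρ π := by
        rw [← ker_le h res hker, map_sub, hua, sub_self]
      push_cast at this ⊢
      rw [ρ.map_mul, map_pow, hP, pow_succ']
      gcongr

lemma relation_mod (h : VCtx ρ π) {F : Type u} [Field F] [Finite F] (res : intRing h →+* F)
    (hker : ∀ x : intRing h, res x = 0 ↔ ρ (x : B) < 1)
    (s n' : ℕ) (hs0 : 0 < s) (hn' : 0 < n')
    (hconj : ∀ x, res (conjHom h x) = res x ^ s)
    (X : intRing h) (hX0 : res X ≠ 0) (hw : ∀ x : F, x ≠ 0 → ∃ k : ℕ, x = res X ^ k)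
    (hord : ∀ i, n' ∣ i ↔ ∀ x : F, x ^ (s ^ i) = x) (N : ℕ) :
    ∃ c : ℕ → intRing h, c n' = 1 ∧ ∀ b : intRing h,
      ρ ((∑ k ∈ Finset.range (n' + 1), c k * b * X ^ k : intRing h) : B) ≤ ρ π ^ N := by
  have : Fintype F := Fintype.ofFinite F
  set Q := Nat.card F with hQdef
  have hQF : Q = Fintype.card F := Nat.card_eq_fintype_card
  have hQ2 : 2 ≤ Q := by rw [hQF]; exact Fintype.one_lt_card
  have hpowQ : ∀ x : F, x ^ Q = x := fun x => by rw [hQF]; exact FiniteField.pow_card x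
  have hpowQN : ∀ (x : F) (M : ℕ), x ^ (Q ^ M) = x := fun x M => by
    rw [hQF]; exact FiniteField.pow_card_pow M x
  have hunitres : ∀ x : intRing h, res x ≠ 0 → IsUnit x := fun x hx =>
    isUnit_int h x (fun hlt => hx ((hker x).mpr hlt))
  have hQ0 : (Q : F) = 0 := by rw [hQF]; simp
  have hQ1 : res ((Q - 1 : ℕ) : intRing h) = -1 := by
    rw [map_natCast, Nat.cast_sub (by omega), hQ0]; simp
  let mk := Ideal.Quotient.mk (mIdeal h N)
  have hmk : ∀ x y : intRing h, mk x = mk y ↔ ρ ((x - y : intRing h) : B) ≤ ρ π ^ N := by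
    intro x y; rw [Ideal.Quotient.eq, mem_mIdeal]
  obtain ⟨T, hTdef⟩ : ∃ T : intRing h, T = X ^ (Q ^ N) := ⟨_, rfl⟩
  have hresT : res T = res X := by simp only [hTdef, map_pow, hpowQN]
  have hstep : ρ π ^ (N + 1) ≤ ρ π ^ N := pow_le_pow_of_le_one h.pos.le h.lt.le (by omega)
  have hTQ : mk T ^ Q = mk T := by
    rw [← map_pow, hmk]
    have := teich_iter h res hker (X ^ Q) X (Commute.pow_self X Q) N
      (by rw [map_pow, hpowQ])
    have e : T ^ Q = (X ^ Q) ^ (Q ^ N) := by rw [hTdef, ← pow_mul, ← pow_mul, mul_comm]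
    rw [e, hTdef]; exact this.trans hstep
  have hTu : IsUnit (mk T) := (hunitres T (by rwa [hresT])).map mk
  have hT1 : mk T ^ (Q - 1) = 1 := by
    apply hTu.mul_left_cancel
    rw [← pow_succ', Nat.sub_add_cancel (by omega), hTQ, mul_one]
  have hTQN : ∀ M, mk T ^ (Q ^ M) = mk T := by
    intro M
    induction M with
    | zero => simp
    | succ M ih => rw [pow_succ, pow_mul, ih, hTQ]
  let p : intRing h := ⟨π, h.lt.le⟩
  let P : intRing h := ∑ i ∈ Finset.range (Q - 1), T ^ (s * i) * p * T ^ (Q - 1 - i)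
  have hconjp : ∀ x : intRing h, p * x = conjHom h x * p := by
    intro x; apply Subtype.ext; exact (conjHom_mul h x).symm
  have hP : ρ (P : B) = ρ π := by
    let U : intRing h := ∑ i ∈ Finset.range (Q - 1), T ^ (s * i) * (conjHom h T) ^ (Q - 1 - i)
    have hPU : P = U * p := by
      simp only [P, U, Finset.sum_mul]
      refine Finset.sum_congr rfl fun i _ => ?_
      rw [mul_assoc, hconjp, map_pow, mul_assoc]
    have hU : res U = -1 := by
      rw [← hQ1]
      simp only [U, map_sum, map_mul, map_pow, hconj, hresT]
      rw [Finset.sum_congr rfl (g := fun _ => (1 : F))]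
      · simp
      · intro i hi
        have := Finset.mem_range.mp hi
        rw [← pow_mul, ← pow_add, ← mul_add, Nat.add_sub_cancel' this.le, mul_comm, pow_mul,
          hQF, FiniteField.pow_card_sub_one_eq_one _ hX0, one_pow]
    have hU1 : ρ (U : B) = 1 := by
      refine le_antisymm U.2 (not_lt.mp fun hlt => ?_)
      rw [← hker, hU] at hlt
      simp at hlt
    rw [hPU]; push_cast; rw [ρ.map_mul, hU1, one_mul]
  have hPT : mk P * mk T = mk T ^ s * mk P := by
    let G : ℕ → (intRing h ⧸ mIdeal h N) := fun i => mk T ^ (s * i) * mk p * mk T ^ (Q - i)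
    have e1 : mk P * mk T = ∑ i ∈ Finset.range (Q - 1), G i := by
      simp only [P, map_sum, map_mul, map_pow, Finset.sum_mul]
      refine Finset.sum_congr rfl fun i hi => ?_
      have := Finset.mem_range.mp hi
      simp only [G]
      rw [mul_assoc, ← pow_succ]
      congr 2; omega
    have e2 : mk T ^ s * mk P = ∑ i ∈ Finset.range (Q - 1), G (i + 1) := by
      simp only [P, map_sum, map_mul, map_pow, Finset.mul_sum]
      refine Finset.sum_congr rfl fun i hi => ?_
      simp only [G]
      rw [← mul_assoc, ← mul_assoc, ← pow_add]
      congr 2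
      · rw [Nat.mul_succ, add_comm]
      · omega
    have e3 : G 0 = G (Q - 1) := by
      simp only [G]
      have : Q - (Q - 1) = 1 := by omega
      rw [this, mul_comm s (Q - 1), pow_mul _ (Q - 1), hT1]
      simp [hTQ]
    have e4 := Finset.sum_range_succ G (Q - 1)
    rw [Finset.sum_range_succ', e3] at e4
    rw [e1, e2]
    exact (add_right_cancel e4).symm
  have hs : mk T ^ (s ^ n') = mk T := by
    have h1 := teich_iter h res hker (T ^ (s ^ n')) T (Commute.pow_self T _) N
      (by rw [map_pow]; exact (hord n').mp dvd_rfl _)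
    have h2 := (hmk _ _).mpr (h1.trans hstep)
    rw [map_pow, map_pow, map_pow, ← hQdef, ← pow_mul, mul_comm, pow_mul, hTQN] at h2
    exact h2
  have hunit : ∀ i, ¬ n' ∣ i → IsUnit (mk T - mk T ^ (s ^ i)) := by
    intro i hi
    rw [← map_pow, ← map_sub]
    refine (hunitres _ fun h0 => hi ((hord i).mpr fun x => ?_)).map mk
    rw [map_sub, map_pow, hresT, sub_eq_zero] at h0
    by_cases hx : x = 0
    · rw [hx, zero_pow (by positivity)]
    · obtain ⟨k, rfl⟩ := hw x hx
      rw [← pow_mul, mul_comm, pow_mul, ← h0]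
  have hQu : IsUnit (((Q - 1 : ℕ) : intRing h ⧸ mIdeal h N)) := by
    rw [← map_natCast mk]
    exact (hunitres _ (by rw [hQ1]; simp)).map mk
  obtain ⟨c, hc1, hc⟩ := twisted_identity (mk T) (mk P) (mk X) s n' Q N hs0 hn' hQ2 hT1 hPT hs
    (by rw [hTdef]; exact (Commute.pow_self X (Q ^ N)).map mk) (by
      intro b
      obtain ⟨b, rfl⟩ := Ideal.Quotient.mk_surjective b
      obtain ⟨t, ht, hb⟩ := expand h res hker T (by rw [hresT]; exact hw) P hP b N
      refine ⟨fun i => mk (t i), fun i => ?_, ?_⟩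
      · rcases ht i with h0 | ⟨k, hk⟩
        · left; simp only [h0, map_zero]
        · right; exact ⟨k, by simp only [hk, map_pow]⟩
      · have := (hmk _ _).mpr hb
        simpa only [map_sum, map_mul, map_pow] using this) hunit hQu
  have hlift : ∀ k, ∃ d : intRing h, mk d = c k ∧ (k = n' → d = 1) := by
    intro k
    by_cases hk : k = n'
    · exact ⟨1, by rw [hk, hc1, map_one], fun _ => rfl⟩
    · obtain ⟨d, hd⟩ := Ideal.Quotient.mk_surjective (c k)
      exact ⟨d, hd, fun h => absurd h hk⟩
  choose d hd hd1 using hlift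
  refine ⟨d, hd1 n' rfl, fun b => ?_⟩
  have := hc (mk b)
  simp only [← hd, ← map_pow, ← map_mul, ← map_sum] at this
  rw [← mem_mIdeal]
  exact Ideal.Quotient.eq_zero_iff_mem.mp this

lemma order_ge (h : VCtx ρ π) {F : Type u} [Field F] [Finite F] (res : intRing h →+* F)
    (hsurj : Function.Surjective res)
    (hker : ∀ x : intRing h, res x = 0 ↔ ρ (x : B) < 1)
    (K : Subfield F)
    (hK : ∀ z : intRing h, (z : B) ∈ Subring.center B → res z ∈ K)
    (s n' : ℕ) (hs0 : 0 < s) (hn' : 0 < n')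
    (hconj : ∀ x, res (conjHom h x) = res x ^ s)
    (hord : ∀ i, n' ∣ i ↔ ∀ x : F, x ^ (s ^ i) = x) : Module.finrank K F ≤ n' := by
  classical
  by_contra hlt
  push Not at hlt
  obtain ⟨w, hw0, hw⟩ := ff_generator (F := F)
  obtain ⟨X, rfl⟩ := hsurj w
  have hspan := span_contra h res K hK X hw n' hlt
  obtain ⟨φ, hφ, hφ0, hφ1⟩ := mulOp_density _
    ((Finset.range n').image (fun k : ℕ => (X : B) ^ k)) rfl ((X : B) ^ n')
    (by rw [Finset.coe_image]; exact hspan)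
  obtain ⟨J, C, hC, hJ⟩ := mulOp_bound h hφ
  have hall : ∀ N : ℕ, ρ π ^ J ≤ C * ρ π ^ N := by
    intro N
    obtain ⟨c, hc1, hc⟩ := relation_mod h res hker s n' hs0 hn' hconj X hw0 hw hord N
    have := hJ J le_rfl (n' + 1) (fun k => (c k : B)) X (ρ π ^ N) (h.ppos N).le
      (fun b hb => by simpa using hc ⟨b, hb⟩)
    rw [Finset.sum_range_succ, Finset.sum_eq_zero, hφ1, hc1] at this
    · simpa using this
    · intro k hk
      rw [hφ0 _ (Finset.mem_image_of_mem _ hk)]; simp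
  have ht : Filter.Tendsto (fun N : ℕ => C * ρ π ^ N) Filter.atTop (nhds (C * 0)) :=
    (tendsto_pow_atTop_nhds_zero_of_lt_one h.pos.le h.lt).const_mul _
  have := ge_of_tendsto' ht hall
  have := h.ppos J
  linarith

/-- The residue field of a division subring. -/
def resSubfield (h : VCtx ρ π) {F : Type u} [Field F] (res : intRing h →+* F)
    (hker : ∀ x : intRing h, res x = 0 ↔ ρ (x : B) < 1)
    (S : Subring B) (hS : ∀ x ∈ S, x ≠ 0 → x⁻¹ ∈ S) : Subfield F where
  carrier := {x | ∃ z : intRing h, (z : B) ∈ S ∧ res z = x}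
  mul_mem' := by
    rintro _ _ ⟨a, ha, rfl⟩ ⟨b, hb, rfl⟩
    exact ⟨a * b, mul_mem ha hb, map_mul _ _ _⟩
  one_mem' := ⟨1, one_mem S, map_one _⟩
  add_mem' := by
    rintro _ _ ⟨a, ha, rfl⟩ ⟨b, hb, rfl⟩
    exact ⟨a + b, add_mem ha hb, map_add _ _ _⟩
  zero_mem' := ⟨0, zero_mem S, map_zero _⟩
  neg_mem' := by
    rintro _ ⟨a, ha, rfl⟩
    exact ⟨-a, neg_mem ha, map_neg _ _⟩
  inv_mem' := by
    rintro _ ⟨a, ha, rfl⟩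
    by_cases h0 : res a = 0
    · exact ⟨0, zero_mem S, by simp [h0]⟩
    · have h1 : ρ (a : B) = 1 := le_antisymm a.2 (not_lt.mp fun hlt => h0 ((hker a).mpr hlt))
      have hne : (a : B) ≠ 0 := by intro h2; rw [h2] at h1; simp at h1
      have h2 : ρ ((a : B)⁻¹) ≤ 1 := by rw [map_inv₀, h1]; simp
      refine ⟨⟨(a : B)⁻¹, h2⟩, hS _ ha hne, ?_⟩
      apply eq_inv_of_mul_eq_one_left
      rw [← map_mul, ← map_one res]
      congr 1
      apply Subtype.ext
      simp [hne]

lemma mem_resSubfield (h : VCtx ρ π) {F : Type u} [Field F] (res : intRing h →+* F)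
    (hker : ∀ x : intRing h, res x = 0 ↔ ρ (x : B) < 1)
    (S : Subring B) (hS : ∀ x ∈ S, x ≠ 0 → x⁻¹ ∈ S) (x : F) :
    x ∈ resSubfield h res hker S hS ↔ ∃ z : intRing h, (z : B) ∈ S ∧ res z = x := Iff.rfl

lemma card_resSubfield (h : VCtx ρ π) {F : Type u} [Field F] (res : intRing h →+* F)
    (hker : ∀ x : intRing h, res x = 0 ↔ ρ (x : B) < 1)
    (S : Subring B) (hS : ∀ x ∈ S, x ≠ 0 → x⁻¹ ∈ S) :
    Nat.card (resSubfield h res hker S hS) = resCard ρ (S : Set B) := by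
  rw [resCard_eq ρ (S : Set B) (fun b => res ⟨b.1, b.2.2⟩) (fun x y => by
    rw [← sub_eq_zero, ← map_sub, hker]; rfl)]
  have : Set.range (fun b : {b : B // b ∈ (S : Set B) ∧ ρ b ≤ 1} => res ⟨b.1, b.2.2⟩) =
      (resSubfield h res hker S hS : Set F) := by
    ext x
    constructor
    · rintro ⟨b, rfl⟩; exact ⟨⟨b.1, b.2.2⟩, b.2.1, rfl⟩
    · rintro ⟨z, hz, rfl⟩; exact ⟨⟨z.1, hz, z.2⟩, rfl⟩
  rw [this]; rfl

lemma lift_centralizer (h : VCtx ρ π) {F : Type u} [Field F] [Finite F] (res : intRing h →+* F)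
    (hker : ∀ x : intRing h, res x = 0 ↔ ρ (x : B) < 1)
    (L : Subring B) (hL : ∀ x ∈ L, x ≠ 0 → x⁻¹ ∈ L) (e' : ℕ)
    (hmax : ∀ x ∈ L, ρ x < 1 → ρ x ≤ ρ π ^ e') (r : ℕ) (hr : r ≤ e') (x : B)
    (hx : inResCentralizer ρ L π r x) :
    ∃ y, inResCentralizer ρ L π e' y ∧ ρ (y - x) ≤ ρ π ^ r := by
  let 𝕃 := resSubfield h res hker L hL
  have : Fintype 𝕃 := Fintype.ofFinite 𝕃
  obtain ⟨M, hM⟩ : ∃ M, M = Nat.card 𝕃 := ⟨_, rfl⟩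
  have hMF : M = Fintype.card 𝕃 := by rw [hM, Nat.card_eq_fintype_card]
  have hM2 : 2 ≤ M := by rw [hMF]; exact Fintype.one_lt_card
  obtain ⟨w, hw0, hw⟩ := ff_generator (F := 𝕃)
  obtain ⟨ζ, hζL, hζ⟩ := w.2
  have hζ1 : ρ (ζ : B) ≤ 1 := ζ.2
  have hζk : ∀ k, ρ ((ζ : B) ^ k) ≤ 1 := fun k => by
    rw [map_pow]; exact pow_le_one₀ (ρ.nonneg _) hζ1
  have hle : ρ π ^ e' ≤ ρ π ^ r := pow_le_pow_of_le_one h.pos.le h.lt.le hr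
  have hz : ρ ((ζ : B) ^ (M - 1) - 1) ≤ ρ π ^ e' := by
    apply hmax _ (sub_mem (pow_mem hζL _) (one_mem L))
    have : res (ζ ^ (M - 1) - 1) = 0 := by
      rw [map_sub, map_pow, hζ, map_one, sub_eq_zero]
      have h1 := FiniteField.pow_card_sub_one_eq_one w hw0
      rw [← hMF] at h1
      simpa using congrArg Subtype.val h1
    simpa using (hker _).mp this
  have hM0 : ρ (M : B) ≤ ρ π ^ e' := by
    apply hmax _ (natCast_mem L M)
    have : res (M : intRing h) = 0 := by
      rw [map_natCast]
      have h1 : ((M : ℕ) : 𝕃) = 0 := by rw [hMF]; simp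
      simpa using congrArg Subtype.val h1
    simpa using (hker _).mp this
  obtain ⟨hx1, hxc⟩ := hx
  let y : B := -∑ i ∈ Finset.range (M - 1), (ζ : B) ^ i * x * (ζ : B) ^ (M - 1 - i)
  have hy1 : ρ y ≤ 1 := by
    simp only [y]
    rw [ρ.map_neg]
    refine h.sum_le _ _ zero_le_one fun i _ => ?_
    exact h.mul_le_right (hζk _) (h.mul_le_left (hζk _) hx1)
  have hcz : ρ (y * ζ - ζ * y) ≤ ρ π ^ e' := by
    let G : ℕ → B := fun i => (ζ : B) ^ i * x * (ζ : B) ^ (M - i)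
    have e1 : y * ζ = -∑ i ∈ Finset.range (M - 1), G i := by
      simp only [y, neg_mul, Finset.sum_mul]
      congr 1
      refine Finset.sum_congr rfl fun i hi => ?_
      have := Finset.mem_range.mp hi
      simp only [G]
      rw [mul_assoc, ← pow_succ]
      congr 2; omega
    have e2 : ζ * y = -∑ i ∈ Finset.range (M - 1), G (i + 1) := by
      simp only [y, mul_neg, Finset.mul_sum]
      congr 1
      refine Finset.sum_congr rfl fun i hi => ?_
      simp only [G]
      rw [← mul_assoc, ← mul_assoc, ← pow_succ']
      congr 2; omega
    have e4 := Finset.sum_range_succ G (M - 1)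
    rw [Finset.sum_range_succ'] at e4
    have e5 : y * ζ - ζ * y = G (M - 1) - G 0 := by
      rw [e1, e2, eq_sub_of_add_eq e4]; abel
    have e6 : G (M - 1) - G 0 = (((ζ : B) ^ (M - 1) - 1) * x - x * ((ζ : B) ^ (M - 1) - 1)) * ζ := by
      simp only [G]
      have h1 : M - (M - 1) = 1 := by omega
      have h2 : (ζ : B) ^ (M - 0) = (ζ : B) ^ (M - 1) * ζ := by
        rw [← pow_succ]; congr 1; omega
      rw [h1, h2]
      simp only [pow_zero, pow_one, one_mul, sub_mul, mul_sub, mul_one, mul_assoc]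
      abel
    rw [e5, e6]
    exact h.mul_le_right hζ1 (h.sub_le (h.mul_le_right hx1 hz) (h.mul_le_left hx1 hz))
  have hczk : ∀ k, ρ (y * (ζ : B) ^ k - (ζ : B) ^ k * y) ≤ ρ π ^ e' := by
    intro k
    induction k with
    | zero => simp [(h.ppos e').le]
    | succ k ih =>
      have : y * (ζ : B) ^ (k + 1) - (ζ : B) ^ (k + 1) * y =
          (y * (ζ : B) ^ k - (ζ : B) ^ k * y) * ζ + (ζ : B) ^ k * (y * ζ - ζ * y) := by
        rw [pow_succ]; noncomm_ring
      rw [this]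
      exact h.add_le (h.mul_le_right hζ1 ih) (h.mul_le_left (hζk k) hcz)
  have hsmall : ∀ l : B, ρ l ≤ ρ π ^ e' → ρ (y * l - l * y) ≤ ρ π ^ e' := fun l hl =>
    h.sub_le (h.mul_le_left hy1 hl) (h.mul_le_right hy1 hl)
  refine ⟨y, ⟨hy1, fun l hlL hl1 => ?_⟩, ?_⟩
  · by_cases hl0 : ρ l < 1
    · exact hsmall l (hmax l hlL hl0)
    · let l' : intRing h := ⟨l, hl1⟩
      have hne : res l' ≠ 0 := fun h0 => hl0 ((hker l').mp h0)
      obtain ⟨k, hk⟩ := hw ⟨res l', l', hlL, rfl⟩ (fun h0 => hne (congrArg Subtype.val h0))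
      have hk' : res l' = res ζ ^ k := by
        rw [hζ]; simpa using congrArg Subtype.val hk
      have hd : ρ (l - (ζ : B) ^ k) ≤ ρ π ^ e' := by
        apply hmax _ (sub_mem hlL (pow_mem hζL k))
        have : res (l' - ζ ^ k) = 0 := by rw [map_sub, map_pow, hk', sub_self]
        simpa [l'] using (hker _).mp this
      have e : y * l - l * y = (y * (l - (ζ : B) ^ k) - (l - (ζ : B) ^ k) * y) +
          (y * (ζ : B) ^ k - (ζ : B) ^ k * y) := by noncomm_ring
      rw [e]
      exact h.add_le (hsmall _ hd) (hczk k)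
  · have hterm : ∀ i ∈ Finset.range (M - 1),
        ρ ((ζ : B) ^ i * x * (ζ : B) ^ (M - 1 - i) - x) ≤ ρ π ^ r := by
      intro i hi
      have hi' := Finset.mem_range.mp hi
      have hp : (ζ : B) ^ (M - 1) = (ζ : B) ^ i * (ζ : B) ^ (M - 1 - i) := by
        rw [← pow_add]; congr 1; omega
      have e : (ζ : B) ^ i * x * (ζ : B) ^ (M - 1 - i) - x =
          x * ((ζ : B) ^ (M - 1) - 1) -
            (x * (ζ : B) ^ i - (ζ : B) ^ i * x) * (ζ : B) ^ (M - 1 - i) := by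
        rw [hp]; noncomm_ring
      rw [e]
      exact h.sub_le (h.mul_le_left hx1 (hz.trans hle))
        (h.mul_le_right (hζk _) (hxc _ (pow_mem hζL i) (hζk i)))
    have e : y - x = -(∑ i ∈ Finset.range (M - 1),
        ((ζ : B) ^ i * x * (ζ : B) ^ (M - 1 - i) - x)) - (M : B) * x := by
      rw [Finset.sum_sub_distrib]
      simp only [Finset.sum_const, Finset.card_range, nsmul_eq_mul, y]
      rw [Nat.cast_sub (by omega)]
      push_cast
      noncomm_ring
    rw [e]
    refine h.sub_le ?_ (h.mul_le_right hx1 (hM0.trans hle))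
    rw [ρ.map_neg]
    exact h.sum_le _ _ (h.ppos r).le hterm

lemma conjHom_pow_res (h : VCtx ρ π) {F : Type u} [Field F] (res : intRing h →+* F) (s : ℕ)
    (hconj : ∀ x, res (conjHom h x) = res x ^ s) (r : ℕ) (l : intRing h) :
    ∃ l' : intRing h, π ^ r * (l : B) = l' * π ^ r ∧ res l' = res l ^ (s ^ r) := by
  induction r with
  | zero => exact ⟨l, by simp, by simp⟩
  | succ r ih =>
    obtain ⟨l', h1, h2⟩ := ih
    refine ⟨conjHom h l', ?_, ?_⟩
    · rw [pow_succ', mul_assoc, h1, ← mul_assoc, ← mul_assoc, conjHom_mul]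
    · rw [hconj, h2, ← pow_mul, pow_succ]

lemma exists_sigma (h : VCtx ρ π) {F : Type u} [Field F] (res : intRing h →+* F)
    (hsurj : Function.Surjective res)
    (hker : ∀ x : intRing h, res x = 0 ↔ ρ (x : B) < 1) :
    ∃ σ : F →+* F, ∀ x, res (conjHom h x) = σ (res x) := by
  have hle : RingHom.ker res ≤ RingHom.ker (res.comp (conjHom h)) := by
    intro x hx
    rw [RingHom.mem_ker, hker] at hx
    rw [RingHom.mem_ker, RingHom.comp_apply, hker]
    have : ρ (π * x * π⁻¹) < 1 := by rwa [h.conj_int]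
    exact this
  refine ⟨RingHom.liftOfSurjective res hsurj ⟨res.comp (conjHom h), hle⟩, fun x => ?_⟩
  exact (RingHom.liftOfRightInverse_comp_apply res _ _ ⟨res.comp (conjHom h), hle⟩ x).symm

end Val

/-- Theorem 5.2 and its lemma: in the full rose FR(L) of a
division subalgebra L ⊆ B with e' = e(B/L) and f = f(L/K): every element of the
residue field 𝔹 lifts to an element of ℂ_{e'}; every vertex whose level r
(1 ≤ r < e') is a positive multiple of f is a node (it has at least two distinct
lifts one level up), and no vertex whose level is not a multiple of f is a node
(its lift one level up is unique if it exists).  Hence FR(L) is the largest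
(q^n − q^{e'}, e')-rose with nodes only at distances from the center divisible
by f. -/
theorem full_rose_structure
    (ρ : AbsoluteValue B ℝ) (hna : IsNonarchimedean ρ)
    (πB : B)
    (hπB : 0 < ρ πB ∧ ρ πB < 1 ∧ ∀ x : B, x ≠ 0 → ρ x < 1 → ρ x ≤ ρ πB)
    (hdisc : ∀ x : B, x ≠ 0 → ∃ k : ℤ, ρ x = ρ πB ^ k)
    (q n f e' : ℕ) (hq : 2 ≤ q) (hn : 0 < n) (he' : 1 ≤ e')
    (hresK : resCard ρ (Subring.center B : Set B) = q)
    (hresB : resCard ρ (Set.univ : Set B) = q ^ n)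
    -- L is a division subalgebra with residue degree f and e' = e(B/L)
    (L : Subring B) (hKL : Subring.center B ≤ L)
    (hLdiv : ∀ x ∈ L, x ≠ 0 → x⁻¹ ∈ L)
    (hresL : resCard ρ (L : Set B) = q ^ f)
    (πL : B) (hπLmem : πL ∈ L)
    (hπL : 0 < ρ πL ∧ ρ πL < 1 ∧ ∀ x ∈ L, ρ x < 1 → ρ x ≤ ρ πL)
    (heBL : ρ πL = ρ πB ^ e') :
    -- (a) every element of 𝔹 lifts to ℂ_{e'}
    (∀ b : B, ρ b ≤ 1 → ∃ x : B, ρ (x - b) < 1 ∧ inResCentralizer ρ L πB e' x) ∧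
    -- (b) nodes of the full rose occur exactly at levels divisible by f
    (∀ r : ℕ, 1 ≤ r → r < e' →
      ((f ∣ r → ∀ x : B, inResCentralizer ρ L πB r x →
          ∃ y z : B, isChild ρ L πB r x y ∧ isChild ρ L πB r x z ∧
            ρ πB ^ (r + 1) < ρ (y - z)) ∧
       (¬ f ∣ r → ∀ x : B, inResCentralizer ρ L πB r x →
          ∀ y z : B, isChild ρ L πB r x y → isChild ρ L πB r x z →
            ρ (y - z) ≤ ρ πB ^ (r + 1)))) := by
  have h : VCtx ρ πB := ⟨hna, hπB.1, hπB.2.1, fun x hx => by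
    by_cases h0 : x = 0
    · rw [h0]; simp
    · exact hπB.2.2 x h0 hx⟩
  obtain ⟨F, _, res, _, hsurj, hker⟩ := exists_residue h (q ^ n) (by positivity) hresB
  have hcinv : ∀ x ∈ Subring.center B, x ≠ 0 → x⁻¹ ∈ Subring.center B :=
    fun x hx _ => Set.inv_mem_center hx
  let K := resSubfield h res hker (Subring.center B) hcinv
  let 𝕃 := resSubfield h res hker L hLdiv
  have hKc : Nat.card K = q := by rw [card_resSubfield, hresK]
  have hLc : Nat.card 𝕃 = q ^ f := by rw [card_resSubfield, hresL]
  have hFc : Nat.card F = q ^ n := by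
    rw [← hresB, resCard_eq ρ Set.univ (fun b => res ⟨b.1, b.2.2⟩) (fun x y => by
      rw [← sub_eq_zero, ← map_sub, hker]; rfl)]
    have : Set.range (fun b : {b : B // b ∈ (Set.univ : Set B) ∧ ρ b ≤ 1} =>
        res ⟨b.1, b.2.2⟩) = Set.univ := by
      rw [Set.eq_univ_iff_forall]
      intro z
      obtain ⟨x, rfl⟩ := hsurj z
      exact ⟨⟨x.1, trivial, x.2⟩, rfl⟩
    rw [this, Nat.card_univ]
  obtain ⟨σ, hσ⟩ := exists_sigma h res hsurj hker
  have hfix : ∀ x ∈ K, σ x = x := by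
    rintro _ ⟨z, hz, rfl⟩
    rw [← hσ]
    congr 1
    apply Subtype.ext
    change πB * z * πB⁻¹ = z
    rw [Subring.mem_center_iff.mp hz πB, mul_assoc, mul_inv_cancel₀ h.pne, mul_one]
  obtain ⟨j, n', hn', hσj, hord, hfrob, hfr⟩ := ff_aut K q n hq hKc hFc σ hfix
  have hconj : ∀ x, res (conjHom h x) = res x ^ (q ^ j) := fun x => by rw [hσ, hσj]
  have hs0 : 0 < q ^ j := by positivity
  have hnn : n ≤ n' := by
    rw [← hfr]
    exact order_ge h res hsurj hker K (fun z hz => ⟨z, hz, rfl⟩) (q ^ j) n' hs0 hn' hconj hord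
  have hmax : ∀ x ∈ L, ρ x < 1 → ρ x ≤ ρ πB ^ e' := fun x hx hx1 => by
    rw [← heBL]; exact hπL.2.2 x hx hx1
  refine ⟨fun b hb => ?_, fun r hr1 hre => ⟨fun hfr' x hx => ?_, fun hnf x hx y z hy hz => ?_⟩⟩
  · have hb1 : inResCentralizer ρ L πB 1 b := by
      refine ⟨hb, fun l _ hl => ?_⟩
      rw [pow_one]
      have : res (⟨b, hb⟩ * ⟨l, hl⟩ - ⟨l, hl⟩ * ⟨b, hb⟩) = 0 := by
        rw [map_sub, map_mul, map_mul, mul_comm, sub_self]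
      exact (ker_le h res hker _).mp this
    obtain ⟨y, hy, hyb⟩ := lift_centralizer h res hker L hLdiv e' hmax 1 he' b hb1
    exact ⟨y, (by rw [pow_one] at hyb; exact hyb.trans_lt h.lt), hy⟩
  · obtain ⟨y, hy, hyx⟩ := lift_centralizer h res hker L hLdiv e' hmax r hre.le x hx
    have hle : ρ πB ^ e' ≤ ρ πB ^ (r + 1) := pow_le_pow_of_le_one h.pos.le h.lt.le hre
    have hπr : ρ (πB ^ r) = ρ πB ^ r := map_pow _ _ _
    have hyc : inResCentralizer ρ L πB (r + 1) y :=
      ⟨hy.1, fun l hl hl1 => (hy.2 l hl hl1).trans hle⟩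
    refine ⟨y, y + πB ^ r, ⟨hyx, hyc⟩, ⟨?_, ?_, fun l hl hl1 => ?_⟩, ?_⟩
    · rw [add_sub_right_comm]; exact h.add_le hyx hπr.le
    · exact h.add_le hy.1 (hπr.le.trans (h.ple r))
    · have e : (y + πB ^ r) * l - l * (y + πB ^ r) =
          (y * l - l * y) + (πB ^ r * l - l * πB ^ r) := by noncomm_ring
      rw [e]
      refine h.add_le (hyc.2 l hl hl1) ?_
      obtain ⟨l', hl', hres'⟩ := conjHom_pow_res h res (q ^ j) hconj r ⟨l, hl1⟩
      have hfixl : res l' = res ⟨l, hl1⟩ := by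
        rw [hres']
        obtain ⟨c, rfl⟩ := hfr'
        have : Fintype 𝕃 := Fintype.ofFinite 𝕃
        have h1 := FiniteField.pow_card_pow (j * c) (⟨res ⟨l, hl1⟩, ⟨l, hl1⟩, hl, rfl⟩ : 𝕃)
        rw [← Nat.card_eq_fintype_card, hLc] at h1
        have h2 := congrArg Subtype.val h1
        have e : (q ^ j) ^ (f * c) = (q ^ f) ^ (j * c) := by
          rw [← pow_mul, ← pow_mul]; congr 1; ring
        rw [e]
        simpa using h2
      have h3 : ρ ((l' : B) - l) ≤ ρ πB := by
        have : res (l' - ⟨l, hl1⟩) = 0 := by rw [map_sub, hfixl, sub_self]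
        exact (ker_le h res hker _).mp this
      have h4 : πB ^ r * l = l' * πB ^ r := hl'
      rw [h4, ← sub_mul, ρ.map_mul, hπr, pow_succ']
      gcongr
    · have : y - (y + πB ^ r) = -(πB ^ r) := by abel
      rw [this, ρ.map_neg, hπr]
      exact pow_lt_pow_right_of_lt_one₀ h.pos h.lt (by omega)
  · by_contra hlt
    push Not at hlt
    apply hnf
    have hdle : ρ (y - z) ≤ ρ πB ^ r := by
      have : y - z = (y - x) - (z - x) := by abel
      rw [this]; exact h.sub_le hy.1 hz.1
    have hpne : πB ^ r ≠ 0 := pow_ne_zero _ h.pne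
    have haint : ρ ((y - z) * (πB ^ r)⁻¹) ≤ 1 := by
      rw [ρ.map_mul, map_inv₀, map_pow, mul_inv_le_iff₀ (h.ppos r), one_mul]
      exact hdle
    let a : intRing h := ⟨(y - z) * (πB ^ r)⁻¹, haint⟩
    have ha : (a : B) * πB ^ r = y - z := by simp [a, hpne]
    have ha0 : res a ≠ 0 := by
      intro h0
      rw [ker_le h res hker] at h0
      have : ρ (y - z) ≤ ρ πB ^ (r + 1) := by
        rw [← ha, ρ.map_mul, map_pow, pow_succ']
        gcongr
      linarith
    have hLfix : ∀ v ∈ 𝕃, v ^ ((q ^ j) ^ r) = v := by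
      rintro _ ⟨l, hl, rfl⟩
      obtain ⟨l', hl', hres'⟩ := conjHom_pow_res h res (q ^ j) hconj r l
      have h1 : ρ ((y - z) * l - l * (y - z)) ≤ ρ πB ^ (r + 1) := by
        have : (y - z) * (l : B) - l * (y - z) = (y * l - l * y) - (z * l - l * z) := by
          noncomm_ring
        rw [this]
        exact h.sub_le (hy.2.2 l hl l.2) (hz.2.2 l hl l.2)
      have h2 : (y - z) * (l : B) - l * (y - z) = ((a * l' - l * a : intRing h) : B) * πB ^ r := by
        have h5 : ((a * l' - l * a : intRing h) : B) = (a : B) * l' - l * a := rfl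
        rw [h5, ← ha, sub_mul, mul_assoc (a : B) (πB ^ r), hl', ← mul_assoc, ← mul_assoc]
      rw [h2, ρ.map_mul, map_pow, pow_succ'] at h1
      have h3 := le_of_mul_le_mul_right h1 (h.ppos r)
      rw [← ker_le h res hker, map_sub, map_mul, map_mul, mul_comm (res l), ← mul_sub] at h3
      rcases mul_eq_zero.mp h3 with h4 | h4
      · exact absurd h4 ha0
      · rw [← hres']; exact sub_eq_zero.mp h4
    obtain ⟨i, hi⟩ := hfrob hnn
    refine dvd_of_pow_fix 𝕃 q f r hq hLc fun v hv => ?_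
    have h1 : ∀ m, v ^ (q ^ m) = v ^ (((q ^ j) ^ i) ^ m) := by
      intro m
      induction m with
      | zero => simp
      | succ m ih => rw [pow_succ, pow_mul, ih, hi, ← pow_mul, ← pow_succ]
    have h2 : ∀ m, v ^ (((q ^ j) ^ r) ^ m) = v := by
      intro m
      induction m with
      | zero => simp
      | succ m ih => rw [pow_succ, pow_mul, ih, hLfix v hv]
    rw [h1, ← pow_mul, mul_comm, pow_mul, h2]

end
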